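/- arXiv:2011.12573 — 2 statements merged into one kernel-verified Lean document; each statement's English description precedes it below -/
import Mathlib

section
/- Let R be a commutative ℚ-algebra, n ≥ 1, and A an n×n matrix over R. Define sequences recursively by d_n = 1, B'_0 = I, and for 1 ≤ k ≤ n: d_{n−k} = −(1/k)·Tr(A·B'_{k−1}) and B'_k = A·B'_{k−1} + d_{n−k}·I. Then adj(A) = (−1)^{n+1}·B'_{n−1}. (Correctness of the adjugate output of the Faddeev–Leverrier algorithm.) -/
/-!
For an `n × n` matrix `A` write `χ = ∑ χₖ Xᵏ` for the characteristic polynomial and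
`adj(X - A) = ∑ Nₖ Xᵏ`. Comparing coefficients in `(X - A) adj(X - A) = χ` gives
`Nₖ = A Nₖ₊₁ + χₖ₊₁`, which is the recursion for `B`, run downwards from `Nₙ₋₁ = 1`. Jacobi's formula
gives `χ' = Tr adj(X - A)`, so taking the trace of `A adj(X - A) = X adj(X - A) - χ` gives
`Tr (A Nₖ) = (k - n) χₖ`, which is the recursion for `d`. Hence `Bₖ = Nₙ₋₁₋ₖ`, and in particular
`Bₙ₋₁ = N₀ = adj(-A)`.
-/

section

open Matrix Polynomial Finset

variable {R m : Type*} [CommRing R] [Fintype m] [DecidableEq m]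

theorem derivative_det_eq_sum_det_updateCol (M : Matrix m m R[X]) :
    derivative M.det = ∑ i, (M.updateCol i fun j => derivative (M j i)).det := by
  have det_summand (σ : Equiv.Perm m) (i : m) :
      ∏ j, M.updateCol i (fun j => derivative (M j i)) (σ j) j =
        (∏ j ∈ univ.erase i, M (σ j) j) * derivative (M (σ i) i) := by
    rw [← prod_erase_mul _ _ (mem_univ i), updateCol_self]
    congr 1
    exact prod_congr rfl fun j hj => updateCol_ne (ne_of_mem_erase hj)
  simp only [det_apply, Units.smul_def, derivative_sum, derivative_smul, derivative_prod_finset,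
    det_summand, smul_sum]
  exact sum_comm

theorem derivative_det_eq_trace_adjugate_mul (M : Matrix m m R[X]) :
    derivative M.det = (M.adjugate * M.map derivative).trace := by
  simp only [derivative_det_eq_sum_det_updateCol, ← cramer_apply, cramer_eq_adjugate_mulVec]
  rfl

theorem derivative_charpoly_eq_trace_adjugate_charmatrix (A : Matrix m m R) :
    derivative A.charpoly = A.charmatrix.adjugate.trace := by
  have map_derivative : A.charmatrix.map derivative = 1 := by
    ext1 i j
    obtain rfl | hij := eq_or_ne i j
    · simp
    · simp [hij]
  rw [charpoly, derivative_det_eq_trace_adjugate_mul, map_derivative, mul_one]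

theorem map_C_mul_adjugate_charmatrix (A : Matrix m m R) :
    A.map C * A.charmatrix.adjugate =
      (X : R[X]) • A.charmatrix.adjugate - A.charpoly • (1 : Matrix m m R[X]) := by
  have map_C_eq : A.map C = (X : R[X]) • (1 : Matrix m m R[X]) - A.charmatrix := by
    rw [charmatrix, scalar_apply, ← smul_one_eq_diagonal, sub_sub_cancel, RingHom.mapMatrix_apply]
  rw [map_C_eq, sub_mul, smul_one_mul, mul_adjugate, charpoly]

theorem trace_map_C_mul_adjugate_charmatrix (A : Matrix m m R) :
    (A.map C * A.charmatrix.adjugate).trace =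
      X * derivative A.charpoly - Fintype.card m • A.charpoly := by
  rw [map_C_mul_adjugate_charmatrix, trace_sub, trace_smul, trace_smul, trace_one,
    ← derivative_charpoly_eq_trace_adjugate_charmatrix, smul_eq_mul, smul_eq_mul, nsmul_eq_mul',
    mul_comm A.charpoly]

theorem trace_coeff_matPolyEquiv (M : Matrix m m R[X]) (k : ℕ) :
    ((matPolyEquiv M).coeff k).trace = M.trace.coeff k := by
  simp only [trace, diag_apply, matPolyEquiv_coeff_apply, finsetSum_coeff]

theorem charpoly_coeff_card (A : Matrix m m R) : A.charpoly.coeff (Fintype.card m) = 1 := by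
  nontriviality R
  simpa using A.charpoly_monic.coeff_natDegree

theorem adjugate_neg_eq_smul (A : Matrix m m R) :
    (-A).adjugate = (-1 : R) ^ (Fintype.card m - 1) • A.adjugate := by
  rw [← neg_one_smul R A, adjugate_smul]

/-- The matrix coefficient of `X ^ k` in `adj(X - A)`, the adjugate of the characteristic matrix
of `A`. These are the matrices that the Faddeev–LeVerrier recursion computes, highest power
first. -/
noncomputable def adjugateCharmatrixCoeff (A : Matrix m m R) (k : ℕ) : Matrix m m R :=
  (matPolyEquiv A.charmatrix.adjugate).coeff k

theorem adjugateCharmatrixCoeff_eq_zero (A : Matrix m m R) {k : ℕ} (hk : Fintype.card m ≤ k) :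
    adjugateCharmatrixCoeff A k = 0 := by
  nontriviality R
  nontriviality Matrix m m R
  have mul_X_sub_C : matPolyEquiv A.charmatrix.adjugate * (X - C A) =
      A.charpoly.map (algebraMap R (Matrix m m R)) := by
    rw [← matPolyEquiv_charmatrix, ← map_mul, adjugate_mul, matPolyEquiv_smul_one, charpoly]
  have degree_add_one_le : (matPolyEquiv A.charmatrix.adjugate).degree + 1 ≤ Fintype.card m :=
    calc (matPolyEquiv A.charmatrix.adjugate).degree + 1
        = (matPolyEquiv A.charmatrix.adjugate * (X - C A)).degree := by
          rw [(monic_X_sub_C A).degree_mul, degree_X_sub_C]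
      _ ≤ A.charpoly.degree := mul_X_sub_C ▸ degree_map_le
      _ = Fintype.card m := A.charpoly_degree_eq_dim
  by_contra hne
  have card_le : (k : WithBot ℕ) + 1 ≤ Fintype.card m :=
    (add_le_add_left (le_degree_of_ne_zero hne) 1).trans degree_add_one_le
  exact absurd (mod_cast card_le) (not_le.mpr (Nat.lt_succ_of_le hk))

theorem adjugateCharmatrixCoeff_eq_mul_add (A : Matrix m m R) (k : ℕ) :
    adjugateCharmatrixCoeff A k =
      A * adjugateCharmatrixCoeff A (k + 1) + A.charpoly.coeff (k + 1) • 1 := by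
  have coeff_eq := congrArg (fun M => (matPolyEquiv M).coeff (k + 1))
    (map_C_mul_adjugate_charmatrix A)
  simp only [map_mul, map_sub, matPolyEquiv_map_C, matPolyEquiv_map_smul,
    map_one, mul_one, coeff_C_mul, coeff_sub, Polynomial.map_X, coeff_X_mul, coeff_map,
    Algebra.algebraMap_eq_smul_one] at coeff_eq
  exact (add_eq_of_eq_sub coeff_eq).symm

theorem adjugateCharmatrixCoeff_card_sub_one [Nonempty m] (A : Matrix m m R) :
    adjugateCharmatrixCoeff A (Fintype.card m - 1) = 1 := by
  rw [adjugateCharmatrixCoeff_eq_mul_add, Nat.sub_add_cancel Fintype.card_pos,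
    adjugateCharmatrixCoeff_eq_zero A le_rfl, charpoly_coeff_card, mul_zero, zero_add, one_smul]

theorem adjugateCharmatrixCoeff_zero (A : Matrix m m R) :
    adjugateCharmatrixCoeff A 0 = (-A).adjugate := by
  have eval_charmatrix : A.charmatrix.map (eval 0) = -A := by
    rw [← matPolyEquiv_eval_eq_map, matPolyEquiv_charmatrix]
    simp
  calc adjugateCharmatrixCoeff A 0
      = A.charmatrix.adjugate.map (eval 0) := by
        rw [← matPolyEquiv_eval_eq_map, map_zero, ← coeff_zero_eq_eval_zero,
          adjugateCharmatrixCoeff]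
    _ = (A.charmatrix.map (eval 0)).adjugate :=
      (evalRingHom (0 : R)).map_adjugate A.charmatrix
    _ = (-A).adjugate := by rw [eval_charmatrix]

theorem trace_mul_adjugateCharmatrixCoeff (A : Matrix m m R) (k : ℕ) :
    (A * adjugateCharmatrixCoeff A k).trace =
      k * A.charpoly.coeff k - Fintype.card m * A.charpoly.coeff k := by
  have coeff_X_mul_derivative : (X * derivative A.charpoly).coeff k = k * A.charpoly.coeff k := by
    cases k with
    | zero => simp
    | succ k => rw [coeff_X_mul, coeff_derivative, Nat.cast_succ, mul_comm]
  rw [adjugateCharmatrixCoeff, ← coeff_C_mul, ← matPolyEquiv_map_C, ← map_mul,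
    trace_coeff_matPolyEquiv, trace_map_C_mul_adjugate_charmatrix, coeff_sub,
    coeff_X_mul_derivative, coeff_smul, nsmul_eq_mul]

theorem nsmul_charpoly_coeff_card_sub (A : Matrix m m R) {k : ℕ} (hk : k ≤ Fintype.card m) :
    k • A.charpoly.coeff (Fintype.card m - k) =
      -(A * adjugateCharmatrixCoeff A (Fintype.card m - k)).trace := by
  rw [trace_mul_adjugateCharmatrixCoeff, nsmul_eq_mul, Nat.cast_sub hk]
  ring

theorem faddeevLeVerrier_eq_adjugateCharmatrixCoeff (A : Matrix m m R) (d : ℕ → R)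
    (B : ℕ → Matrix m m R)
    (hreg : ∀ k, 1 ≤ k → k < Fintype.card m → IsSMulRegular R k) (hB0 : B 0 = 1)
    (hd : ∀ k, 1 ≤ k → k < Fintype.card m →
      k • d (Fintype.card m - k) = -(A * B (k - 1)).trace)
    (hB : ∀ k, 1 ≤ k → k < Fintype.card m →
      B k = A * B (k - 1) + d (Fintype.card m - k) • 1)
    {k : ℕ} (hk : k < Fintype.card m) :
    B k = adjugateCharmatrixCoeff A (Fintype.card m - 1 - k) := by
  induction k with
  | zero =>
    have : Nonempty m := Fintype.card_pos_iff.mp hk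
    rw [hB0, Nat.sub_zero, adjugateCharmatrixCoeff_card_sub_one]
  | succ k ih =>
    have hBk : B k = adjugateCharmatrixCoeff A (Fintype.card m - (k + 1)) := by
      rw [ih (by omega), Nat.sub_sub, add_comm 1 k]
    have hdk : d (Fintype.card m - (k + 1)) = A.charpoly.coeff (Fintype.card m - (k + 1)) := by
      have hsmul : (k + 1) • d (Fintype.card m - (k + 1)) =
          (k + 1) • A.charpoly.coeff (Fintype.card m - (k + 1)) := by
        rw [hd (k + 1) k.succ_pos hk, nsmul_charpoly_coeff_card_sub A hk.le, Nat.add_sub_cancel,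
          hBk]
      exact hreg (k + 1) k.succ_pos hk hsmul
    have hindex : Fintype.card m - 1 - (k + 1) + 1 = Fintype.card m - (k + 1) := by omega
    rw [hB (k + 1) k.succ_pos hk, Nat.add_sub_cancel, hBk, hdk,
      adjugateCharmatrixCoeff_eq_mul_add A (Fintype.card m - 1 - (k + 1)), hindex]

theorem nsmul_eq_of_eq_neg_inv_smul {M : Type*} [AddCommGroup M] [Module ℚ M] {k : ℕ}
    (hk : k ≠ 0) {x y : M} (hxy : x = -((k : ℚ)⁻¹ • y)) : k • x = -y := by
  rw [hxy, ← Nat.cast_smul_eq_nsmul ℚ, smul_neg, smul_inv_smul₀ (Nat.cast_ne_zero.mpr hk)]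

theorem stmt10_general {n : ℕ} (hn : 1 ≤ n) (hm : Fintype.card m = n) (A : Matrix m m R)
    (d : ℕ → R) (B : ℕ → Matrix m m R)
    (hreg : ∀ k, 1 ≤ k → k < n → IsSMulRegular R k) (hB0 : B 0 = 1)
    (hd : ∀ k, 1 ≤ k → k < n → k • d (n - k) = -(A * B (k - 1)).trace)
    (hB : ∀ k, 1 ≤ k → k < n → B k = A * B (k - 1) + d (n - k) • 1) :
    A.adjugate = (-1 : R) ^ (n + 1) • B (n - 1) := by
  subst hm
  have hlast : B (Fintype.card m - 1) = (-1 : R) ^ (Fintype.card m - 1) • A.adjugate := by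
    rw [faddeevLeVerrier_eq_adjugateCharmatrixCoeff A d B hreg hB0 hd hB (by omega), Nat.sub_self,
      adjugateCharmatrixCoeff_zero, adjugate_neg_eq_smul]
  have heven : Even (Fintype.card m + 1 + (Fintype.card m - 1)) := ⟨Fintype.card m, by omega⟩
  rw [hlast, smul_smul, ← pow_add, heven.neg_one_pow, one_smul]

end

theorem stmt10 {R : Type*} [CommRing R] [Algebra ℚ R] {n : ℕ} (hn : 1 ≤ n)
    (A : Matrix (Fin n) (Fin n) R) (d : ℕ → R) (B : ℕ → Matrix (Fin n) (Fin n) R)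
    (hdn : d n = 1) (hB0 : B 0 = 1)
    (hd : ∀ k, 1 ≤ k → k ≤ n →
      d (n - k) = -((k : ℚ)⁻¹ • Matrix.trace (A * B (k - 1))))
    (hB : ∀ k, 1 ≤ k → k ≤ n → B k = A * B (k - 1) + d (n - k) • 1) :
    A.adjugate = ((-1 : R) ^ (n + 1)) • B (n - 1) := by
  have := IsAddTorsionFree.of_module_rat R
  exact stmt10_general hn (Fintype.card_fin n) A d B
    (fun k hk _ => nsmul_right_injective (by omega)) hB0
    (fun k hk hkn => nsmul_eq_of_eq_neg_inv_smul (by omega) (hd k hk hkn.le))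
    (fun k hk hkn => hB k hk hkn.le)
end

section
/- Let R be a commutative ring, n ≥ 1, and A an n×n matrix over R with characteristic polynomial coefficients c_i and Faddeev–Leverrier matrices B_k (B_0 = I, B_k = A·B_{k-1} + c_{n-k}·I). Then for all integers k ≥ 1 and j ≥ 0 with k + j ≤ n, one has (k+j)·c_{n−k−j} + Tr(A^{j+1}·B_{k−1}) + Σ_{i=1}^{j} Tr(A^i)·c_{n−k−j+i} = 0. (This identity, in multiplied division-free form, justifies the inner loop of the Preparata–Sarwate baby-step giant-step algorithm, which extracts m consecutive coefficients from a single matrix B_{k−1} using precomputed powers of A and their traces.) -/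
noncomputable def flSeq {R : Type*} [CommRing R] {n : ℕ}
    (A : Matrix (Fin n) (Fin n) R) : ℕ → Matrix (Fin n) (Fin n) R
  | 0 => 1
  | k + 1 => A * flSeq A k + (A.charpoly.coeff (n - (k + 1))) • 1

/-!
Let `p = c_0 + ⋯ + c_n X^n` be the characteristic polynomial of `A`. Jacobi's formula gives
`p' = Tr (adj (X - A))`, and `(X - A) * adj (X - A) = p • 1` exhibits `adj (X - A)` as the quotient
of `p` by `X - A`, whose coefficients are the truncations
`c_{m+1} + c_{m+2} A + ⋯ + c_n A^{n-m-1}`. Comparing coefficients in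
`X * p' = n * p + Tr (A * adj (X - A))` yields Newton's identities. The matrices `B_k` are
themselves such truncations, so `Tr (A^{j+1} * B_{k-1})` is precisely the part of Newton's identity
for `c_{n-k-j}` that involves the traces of `A^{j+1}, …, A^{k+j}`.
-/

section Jacobi

variable {R S M ι : Type*} [CommSemiring R] [DecidableEq ι]

theorem derivation_prod [CommSemiring S] [Algebra R S] [AddCommMonoid M] [Module R M] [Module S M]
    (D : Derivation R S M) (s : Finset ι) (f : ι → S) :
    D (∏ i ∈ s, f i) = ∑ i ∈ s, (∏ j ∈ s.erase i, f j) • D (f i) := by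
  induction s using Finset.induction_on with
  | empty => simp
  | insert a s ha ih =>
    rw [Finset.prod_insert ha, D.leibniz, ih, Finset.sum_insert ha, Finset.erase_insert ha,
      Finset.smul_sum, add_comm]
    congr 1
    refine Finset.sum_congr rfl fun i hi => ?_
    have hai : a ≠ i := fun h => ha (h ▸ hi)
    rw [Finset.erase_insert_of_ne hai, Finset.prod_insert (by simp [ha]), mul_smul]

variable [CommRing S] [Fintype ι]

theorem adjugate_apply_eq_sum_perm (A : Matrix ι ι S) (i j : ι) :
    A.adjugate i j = ∑ σ : Equiv.Perm ι,
      if σ j = i then σ.sign • ∏ k ∈ Finset.univ.erase j, A k (σ k) else 0 := by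
  rw [Matrix.adjugate_apply, ← Matrix.det_transpose, Matrix.det_apply]
  refine Finset.sum_congr rfl fun σ _ => ?_
  have hrest : ∏ k ∈ Finset.univ.erase j, A.updateRow j (Pi.single i 1) k (σ k)
      = ∏ k ∈ Finset.univ.erase j, A k (σ k) :=
    Finset.prod_congr rfl fun k hk => by rw [Matrix.updateRow_ne (Finset.ne_of_mem_erase hk)]
  simp only [Matrix.transpose_apply]
  rw [← Finset.mul_prod_erase _ _ (Finset.mem_univ j), hrest, Matrix.updateRow_self,
    Pi.single_apply, ite_mul, one_mul, zero_mul, smul_ite, smul_zero]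

theorem derivation_det [Algebra R S] [AddCommGroup M] [Module R M] [Module S M]
    (D : Derivation R S M) (A : Matrix ι ι S) :
    D A.det = ∑ i, ∑ j, A.adjugate j i • D (A i j) := by
  calc D A.det
      = ∑ σ : Equiv.Perm ι, ∑ i,
          (σ.sign • ∏ k ∈ Finset.univ.erase i, A k (σ k)) • D (A i (σ i)) := by
        rw [← Matrix.det_transpose, Matrix.det_apply, map_sum]
        refine Finset.sum_congr rfl fun σ _ => ?_
        simp only [Matrix.transpose_apply, Units.smul_def, map_zsmul, derivation_prod,
          Finset.smul_sum, smul_assoc]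
    _ = ∑ i, ∑ j, A.adjugate j i • D (A i j) := by
        rw [Finset.sum_comm]
        refine Finset.sum_congr rfl fun i _ => ?_
        simp only [adjugate_apply_eq_sum_perm, Finset.sum_smul, ite_smul, zero_smul]
        rw [Finset.sum_comm]
        simp

end Jacobi

section CharacteristicPolynomial

open Polynomial

variable {R ι : Type*} [Fintype ι] [DecidableEq ι]

theorem coeff_trace_eq_trace_coeff_matPolyEquiv [CommSemiring R] (M : Matrix ι ι R[X]) (m : ℕ) :
    M.trace.coeff m = ((matPolyEquiv M).coeff m).trace := by
  simp [Matrix.trace, matPolyEquiv_coeff_apply]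

variable [CommRing R]

theorem coeff_card_charpoly (A : Matrix ι ι R) : A.charpoly.coeff (Fintype.card ι) = 1 := by
  nontriviality R
  simpa only [A.charpoly_natDegree_eq_dim] using A.charpoly_monic.coeff_natDegree

theorem derivative_charpoly (A : Matrix ι ι R) :
    derivative A.charpoly = A.charmatrix.adjugate.trace := by
  have hentry (i j : ι) : derivative (A.charmatrix i j) = (1 : Matrix ι ι R[X]) i j := by
    simp [Matrix.charmatrix_apply, Matrix.diagonal_apply, Matrix.one_apply, apply_ite derivative]
  calc derivative A.charpoly
      = ∑ i, ∑ j, A.charmatrix.adjugate j i • derivative (A.charmatrix i j) :=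
        derivation_det (derivative' : Derivation R R[X] R[X]) A.charmatrix
    _ = A.charmatrix.adjugate.trace := by
        simp [hentry, Matrix.one_apply, Matrix.trace]

theorem matPolyEquiv_adjugate_charmatrix (A : Matrix ι ι R) :
    matPolyEquiv A.charmatrix.adjugate
      = A.charpoly.map (algebraMap R (Matrix ι ι R)) /ₘ (X - C A) := by
  nontriviality Matrix ι ι R
  have hmul : (X - C A) * matPolyEquiv A.charmatrix.adjugate
      = A.charpoly.map (algebraMap R (Matrix ι ι R)) := by
    rw [← Matrix.matPolyEquiv_charmatrix, ← map_mul, Matrix.mul_adjugate, matPolyEquiv_smul_one,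
      Matrix.charpoly]
  rw [← hmul, mul_divByMonic_cancel_left _ (monic_X_sub_C A)]

theorem coeff_matPolyEquiv_adjugate_charmatrix (A : Matrix ι ι R) (m : ℕ) :
    (matPolyEquiv A.charmatrix.adjugate).coeff m
      = ∑ i ∈ Finset.range (Fintype.card ι - m), A.charpoly.coeff (m + 1 + i) • A ^ i := by
  nontriviality Matrix ι ι R
  have : Nontrivial R := (algebraMap R (Matrix ι ι R)).domain_nontrivial
  rw [matPolyEquiv_adjugate_charmatrix, coeff_divByMonic_X_sub_C,
    A.charpoly_monic.natDegree_map, A.charpoly_natDegree_eq_dim, ← Finset.Ico_add_one_right_eq_Icc,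
    Finset.sum_Ico_eq_sum_range, Nat.add_sub_add_right]
  refine Finset.sum_congr rfl fun i _ => ?_
  rw [Nat.add_sub_cancel_left, coeff_map, ← Algebra.commutes, Algebra.smul_def]

theorem X_mul_derivative_charpoly (A : Matrix ι ι R) :
    X * derivative A.charpoly
      = (Fintype.card ι : R[X]) * A.charpoly + (A.map C * A.charmatrix.adjugate).trace := by
  have hsplit : (X : R[X]) • (1 : Matrix ι ι R[X]) = A.charmatrix + A.map C := by
    simp [Matrix.charmatrix, Matrix.smul_one_eq_diagonal]
  calc X * derivative A.charpoly
      = ((X : R[X]) • (1 : Matrix ι ι R[X]) * A.charmatrix.adjugate).trace := by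
        rw [derivative_charpoly, smul_one_mul, Matrix.trace_smul, smul_eq_mul]
    _ = (A.charmatrix * A.charmatrix.adjugate).trace
          + (A.map C * A.charmatrix.adjugate).trace := by
        rw [hsplit, add_mul, Matrix.trace_add]
    _ = Fintype.card ι * A.charpoly + (A.map C * A.charmatrix.adjugate).trace := by
        rw [Matrix.mul_adjugate, Matrix.trace_smul, Matrix.trace_one, smul_eq_mul, mul_comm,
          Matrix.charpoly]

theorem natCast_mul_coeff_charpoly (A : Matrix ι ι R) (m : ℕ) :
    (m : R) * A.charpoly.coeff m = Fintype.card ι * A.charpoly.coeff m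
      + (A * (matPolyEquiv A.charmatrix.adjugate).coeff m).trace := by
  have hcoeff := congrArg (fun p : R[X] => p.coeff m) (X_mul_derivative_charpoly A)
  simp only [coeff_add, coeff_natCast_mul, coeff_trace_eq_trace_coeff_matPolyEquiv,
    map_mul, matPolyEquiv_map_C, coeff_C_mul] at hcoeff
  rw [← hcoeff]
  cases m with
  | zero => simp
  | succ m => rw [coeff_X_mul, coeff_derivative, Nat.cast_succ, mul_comm]

theorem newton_identity_charpoly (A : Matrix ι ι R) {m : ℕ} (hm : m ≤ Fintype.card ι) :
    (m : R) * A.charpoly.coeff (Fintype.card ι - m)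
      + ∑ i ∈ Finset.range m,
          (A ^ (i + 1)).trace * A.charpoly.coeff (Fintype.card ι - m + (i + 1)) = 0 := by
  have hcoeff := natCast_mul_coeff_charpoly A (Fintype.card ι - m)
  rw [coeff_matPolyEquiv_adjugate_charmatrix, Nat.sub_sub_self hm, Nat.cast_sub hm,
    Finset.mul_sum, Matrix.trace_sum] at hcoeff
  simp only [mul_smul_comm, ← pow_succ', Matrix.trace_smul, smul_eq_mul] at hcoeff
  simp only [mul_comm (Matrix.trace _), ← add_assoc, add_right_comm _ _ 1]
  linear_combination -hcoeff

end CharacteristicPolynomial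

section FaddeevLeVerrier

variable {R : Type*} [CommRing R] {n : ℕ}

theorem flSeq_eq_sum (A : Matrix (Fin n) (Fin n) R) {k : ℕ} (hk : k ≤ n) :
    flSeq A k = ∑ i ∈ Finset.range (k + 1), A.charpoly.coeff (n - k + i) • A ^ i := by
  induction k with
  | zero =>
    have hmonic : A.charpoly.coeff n = 1 := by simpa using coeff_card_charpoly A
    simp [flSeq, hmonic]
  | succ k ih =>
    rw [flSeq, ih (by lia), Finset.sum_range_succ' _ (k + 1), Finset.mul_sum, pow_zero, add_zero]
    congr 1
    refine Finset.sum_congr rfl fun i _ => ?_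
    rw [mul_smul_comm, ← pow_succ', show n - (k + 1) + (i + 1) = n - k + i by lia]

theorem trace_pow_mul_flSeq (A : Matrix (Fin n) (Fin n) R) (m : ℕ) {k : ℕ} (hk : k ≤ n) :
    (A ^ m * flSeq A k).trace
      = ∑ i ∈ Finset.range (k + 1), (A ^ (m + i)).trace * A.charpoly.coeff (n - k + i) := by
  simp only [flSeq_eq_sum A hk, Finset.mul_sum, Matrix.trace_sum, mul_smul_comm, ← pow_add,
    Matrix.trace_smul, smul_eq_mul, mul_comm (Matrix.trace _)]

end FaddeevLeVerrier

theorem stmt12 {R : Type*} [CommRing R] {n : ℕ} (hn : 1 ≤ n)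
    (A : Matrix (Fin n) (Fin n) R) :
    ∀ k j : ℕ, 1 ≤ k → k + j ≤ n →
      ((k + j : ℕ) : R) * A.charpoly.coeff (n - k - j)
        + Matrix.trace (A ^ (j + 1) * flSeq A (k - 1))
        + ∑ i ∈ Finset.Icc 1 j, Matrix.trace (A ^ i) * A.charpoly.coeff (n - k - j + i)
      = 0 := by
  intro k j hk hkj
  have hnewton := newton_identity_charpoly A (m := j + k) (by simpa [add_comm] using hkj)
  have htail : (A ^ (j + 1) * flSeq A (k - 1)).trace = ∑ i ∈ Finset.range k,
      (A ^ (j + i + 1)).trace * A.charpoly.coeff (n - k - j + (j + i + 1)) := by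
    rw [trace_pow_mul_flSeq A _ (by lia), Nat.sub_add_cancel hk]
    refine Finset.sum_congr rfl fun i _ => ?_
    rw [add_right_comm, show n - k - j + (j + i + 1) = n - (k - 1) + i by lia]
  have hhead : ∑ i ∈ Finset.Icc 1 j, (A ^ i).trace * A.charpoly.coeff (n - k - j + i)
      = ∑ i ∈ Finset.range j, (A ^ (i + 1)).trace * A.charpoly.coeff (n - k - j + (i + 1)) := by
    rw [← Finset.Ico_add_one_right_eq_Icc, Finset.sum_Ico_eq_sum_range, Nat.add_sub_cancel]
    simp only [add_comm 1]
  rw [Fintype.card_fin, Finset.sum_range_add, add_comm j k, ← Nat.sub_sub] at hnewton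
  rw [htail, hhead]
  linear_combination hnewton
end
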